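/- arXiv:1708.00624 — 2 statements merged into one kernel-verified Lean document; each statement's English description precedes it below -/
import Mathlib

section
/- Let C be a caterpillar whose spine has order s. If the leaves excess satisfies E(C) ≥ ⌊(s-1)/2⌋ - 1, then C is antimagic. -/
/-!
The caterpillar has a longest path `P 0, P 1, …, P (s + 1)` whose inner vertices form the spine;
every other vertex is a leaf attached to some `P j` with `1 ≤ j ≤ s`.  Write `m` for the number of
edges and `Q` for the set of leaves off the path, so that `m = s + 1 + |Q|`.

The path edge `P j P (j + 1)` receives the label `s / 2 + 1 - j / 2` if `j` is even and `m - j / 2`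
if `j` is odd (`pathLabel`).  The even positions then use up the smallest labels, the odd positions
the largest ones, and the two path labels at `P j` add up to `m + s / 2 + 2 - j`.  So spine vertices
of degree two have distinct sums, and these exceed the label of every pendant edge: an odd position
is pendant only when it is the last one, which carries the smallest of the large labels.

The remaining middle labels go to the pendant edges off the path (`exists_leaf_labels`).  One such
leaf is selected at every spine vertex of degree at least three.  The other leaves, whose number is
the leaves excess, get the smaller middle labels; the selected ones get the larger middle labels, in
the order of the partial sums of their spine vertices, which makes the sums at these vertices
distinct.  By the bound on the leaves excess a selected label is at least `s`, which is enough
to lift the sum above all sums at spine vertices of degree two.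

For the bookkeeping the tree is rooted at `P 0`, so that edges correspond to the vertices other than
the root, each vertex standing for the edge to its parent.
-/


open Finset SimpleGraph
open scoped Classical

variable {V : Type*}

/-- The spine of a graph: the set of its non-leaf vertices (for a tree of order at
least 3, these are exactly the vertices of degree at least 2). -/
noncomputable def SimpleGraph.spine [Fintype V] (G : SimpleGraph V) : Set V :=
  {v | 2 ≤ G.degree v}

/-- The order of the spine, i.e., its number of vertices. -/
noncomputable def SimpleGraph.spineOrder [Fintype V] (G : SimpleGraph V) : ℕ :=
  Nat.card G.spine

/-- A caterpillar is a tree of order at least 3 such that removing all of its leaves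
produces a path (i.e., the subgraph induced on the non-leaf vertices is a path graph). -/
def SimpleGraph.IsCaterpillar [Fintype V] (G : SimpleGraph V) : Prop :=
  G.IsTree ∧ 3 ≤ Fintype.card V ∧
    Nonempty ((G.induce G.spine) ≃g pathGraph G.spineOrder)

/-- The vertex sum at `v` of an edge labeling `f`: the sum of the labels of the
edges incident to `v`. -/
noncomputable def SimpleGraph.vertexSum [Fintype V] (G : SimpleGraph V)
    (f : Sym2 V → ℕ) (v : V) : ℕ :=
  ∑ e ∈ G.incidenceFinset v, f e

/-- A graph `G` is `k`-antimagic if there is an injection from its edge set to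
`{1, 2, ..., |E(G)| + k}` such that all vertex sums are pairwise distinct. -/
def SimpleGraph.IsAntimagic [Fintype V] (G : SimpleGraph V) (k : ℕ) : Prop :=
  ∃ f : Sym2 V → ℕ,
    (∀ e ∈ G.edgeFinset, f e ∈ Finset.Icc 1 (G.edgeFinset.card + k)) ∧
    Set.InjOn f ↑G.edgeFinset ∧
    Function.Injective (G.vertexSum f)

/-- The leaves excess of a caterpillar: the sum over all vertices of degree at
least 4 of their degree minus 3. -/
noncomputable def SimpleGraph.leavesExcess [Fintype V] (G : SimpleGraph V) : ℕ :=
  ∑ v ∈ Finset.univ.filter (fun v => 4 ≤ G.degree v), (G.degree v - 3)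

/-! ### Labelling the leaves off the path -/

/-- A finite set can be enumerated compatibly with a given key: the rank of `j` is the number of
elements preceding it when ties between keys are broken by the natural order. -/
lemma exists_rank (H : Finset ℕ) (T : ℕ → ℕ) :
    ∃ r : ℕ → ℕ, (∀ j ∈ H, r j < H.card) ∧
      ∀ j ∈ H, ∀ k ∈ H, j ≠ k → (T j ≤ T k ∧ r j < r k) ∨ (T k ≤ T j ∧ r k < r j) := by
  let κ : ℕ → ℕ ×ₗ ℕ := fun j => toLex (T j, j)
  have key : ∀ j ∈ H, ∀ k, κ j < κ k →
      (H.filter (fun i => κ i < κ j)).card < (H.filter (fun i => κ i < κ k)).card := by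
    intro j hj k hjk
    apply Finset.card_lt_card
    refine ⟨fun i hi => ?_, fun hsub => ?_⟩
    · simp only [Finset.mem_filter] at hi ⊢
      exact ⟨hi.1, hi.2.trans hjk⟩
    · have := hsub (Finset.mem_filter.2 ⟨hj, hjk⟩)
      simp at this
  have le_of : ∀ j k, κ j < κ k → T j ≤ T k := by
    intro j k h
    rcases (Prod.Lex.toLex_lt_toLex.1 h) with h | h
    · exact h.le
    · exact h.1.le
  refine ⟨fun j => (H.filter (fun i => κ i < κ j)).card, fun j hj => ?_, fun j hj k hk hne => ?_⟩
  · apply Finset.card_lt_card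
    refine ⟨Finset.filter_subset _ _, fun hsub => ?_⟩
    have := hsub hj
    simp at this
  · rcases lt_trichotomy (κ j) (κ k) with h | h | h
    · exact Or.inl ⟨le_of _ _ h, key j hj k h⟩
    · have h2 : (T j, j) = (T k, k) := toLex.injective h
      exact absurd (congrArg Prod.snd h2) hne
    · exact Or.inr ⟨le_of _ _ h, key k hk j h⟩

/-- Consecutive labels, starting just above `β`, for a set `Q` of leaves attached at positions
`idx`: a position carrying a leaf receives at least one large label, and the total sums at these
positions, which include a prescribed part `q`, are distinct. -/
lemma exists_leaf_labels [Nonempty V] (Q : Finset V) (idx : V → ℕ) (q : ℕ → ℕ) (β : ℕ) :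
    ∃ g : V → ℕ, Set.InjOn g Q ∧ (∀ u ∈ Q, β + 1 ≤ g u ∧ g u ≤ β + Q.card) ∧
      Set.InjOn (fun j => q j + ∑ u ∈ Q with idx u = j, g u) (Q.image idx) ∧
      ∀ j ∈ Q.image idx, ∃ u ∈ Q, idx u = j ∧ β + (Q.card - (Q.image idx).card) + 1 ≤ g u := by
  set H := Q.image idx with hH
  have hc : ∀ j ∈ H, ∃ u ∈ Q, idx u = j := fun j hj => by simpa [hH] using hj
  choose! c hcQ hcidx using hc
  have hidx : ∀ u ∈ Q, idx u ∈ H := fun u hu => Finset.mem_image_of_mem _ hu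
  -- `R` is the set of the leaves that are not selected.
  set R := Q.filter (fun u => ¬ c (idx u) = u) with hR
  have hcardR : R.card + H.card = Q.card := by
    have h1 : Q.filter (fun u => c (idx u) = u) = H.image c := by
      ext u
      simp only [Finset.mem_filter, Finset.mem_image]
      constructor
      · rintro ⟨h1, h2⟩
        exact ⟨idx u, hidx u h1, h2⟩
      · rintro ⟨j, hj, rfl⟩
        exact ⟨hcQ j hj, by rw [hcidx j hj]⟩
    have h2 : (H.image c).card = H.card := by
      apply Finset.card_image_of_injOn
      intro a ha b hb hab
      rw [← hcidx a ha, ← hcidx b hb, hab]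
    have h3 : (Q.filter (fun u => c (idx u) = u)).card + R.card = Q.card := by
      rw [hR]
      convert Finset.card_filter_add_card_filter_not (s := Q) (fun u => c (idx u) = u)
    rw [h1, h2] at h3
    omega
  obtain ⟨ρ, hρlt, hρinj⟩ : ∃ ρ : V → ℕ, (∀ u ∈ R, ρ u < R.card) ∧ Set.InjOn ρ R := by
    refine ⟨fun u => if h : u ∈ R then (R.equivFin ⟨u, h⟩ : ℕ) else 0, fun u hu => ?_, ?_⟩
    · simp [hu]
    · intro u hu v hv huv
      have hu' : u ∈ R := hu
      have hv' : v ∈ R := hv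
      simp only [hu', hv', dif_pos] at huv
      have := R.equivFin.injective (Fin.ext huv)
      exact congrArg Subtype.val this
  obtain ⟨r, hrlt, hr⟩ := exists_rank H
    (fun j => q j + ∑ u ∈ R with idx u = j, (β + 1 + ρ u))
  let g : V → ℕ := fun u => if u ∈ R then β + 1 + ρ u else β + R.card + 1 + r (idx u)
  have hgR : ∀ u ∈ R, g u = β + 1 + ρ u := fun u hu => by simp [g, hu]
  have hgC : ∀ u, u ∉ R → g u = β + R.card + 1 + r (idx u) := fun u hu => by simp [g, hu]
  have hcR : ∀ u ∈ Q, u ∉ R → c (idx u) = u := by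
    intro u hu h
    by_contra hne
    exact h (Finset.mem_filter.2 ⟨hu, hne⟩)
  have hcnR : ∀ j ∈ H, c j ∉ R := by
    intro j hj h
    exact (Finset.mem_filter.1 h).2 (by rw [hcidx j hj])
  have hrinj : Set.InjOn r H := by
    intro a ha b hb hab
    by_contra hne
    rcases hr a ha b hb hne with h | h <;> omega
  have hsum : ∀ j ∈ H, ∑ u ∈ Q with idx u = j, g u =
      (β + R.card + 1 + r j) + ∑ u ∈ R with idx u = j, (β + 1 + ρ u) := by
    intro j hj
    have h1 : Q.filter (fun u => idx u = j) = insert (c j) (R.filter (fun u => idx u = j)) := by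
      ext u
      simp only [Finset.mem_filter, Finset.mem_insert]
      constructor
      · rintro ⟨hu, rfl⟩
        by_cases h : u ∈ R
        · exact Or.inr ⟨h, rfl⟩
        · exact Or.inl (hcR u hu h).symm
      · rintro (rfl | ⟨hu, h⟩)
        · exact ⟨hcQ j hj, hcidx j hj⟩
        · exact ⟨(Finset.mem_filter.1 hu).1, h⟩
    rw [h1, Finset.sum_insert (fun h => hcnR j hj (Finset.mem_filter.1 h).1), hgC _ (hcnR j hj),
      hcidx j hj]
    congr 1
    exact Finset.sum_congr rfl fun u hu => hgR u (Finset.mem_filter.1 hu).1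
  refine ⟨g, ?_, ?_, ?_, ?_⟩
  · intro u hu v hv huv
    by_cases h1 : u ∈ R <;> by_cases h2 : v ∈ R
    · rw [hgR u h1, hgR v h2] at huv
      exact hρinj h1 h2 (by omega)
    · rw [hgR u h1, hgC v h2] at huv
      have := hρlt u h1
      omega
    · rw [hgC u h1, hgR v h2] at huv
      have := hρlt v h2
      omega
    · rw [hgC u h1, hgC v h2] at huv
      have := hrinj (hidx u hu) (hidx v hv) (by omega)
      rw [← hcR u hu h1, ← hcR v hv h2, this]
  · intro u hu
    by_cases h1 : u ∈ R
    · have := hρlt u h1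
      rw [hgR u h1]
      omega
    · have := hrlt _ (hidx u hu)
      rw [hgC u h1]
      omega
  · intro a ha b hb hab
    by_contra hne
    have ha' : a ∈ H := ha
    have hb' : b ∈ H := hb
    simp only [hsum a ha', hsum b hb'] at hab
    rcases hr a ha b hb hne with h | h <;> omega
  · intro j hj
    refine ⟨c j, hcQ j hj, hcidx j hj, ?_⟩
    rw [hgC _ (hcnR j hj)]
    omega

/-! ### Rooted trees -/

/-- If the number of edges is one less than the number of vertices and the edges from the vertices
other than `r` to their parents are pairwise distinct, then these are all the edges.  The edges at
`v` are then the one from `v` to its parent and those from the children of `v`. -/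
lemma vertexSum_eq_sum_children [Fintype V] (G : SimpleGraph V) (r : V) (par : V → V)
    (hadj : ∀ v, v ≠ r → G.Adj v (par v))
    (hinj : ∀ u v, u ≠ r → v ≠ r → s(u, par u) = s(v, par v) → u = v)
    (hcard : G.edgeFinset.card + 1 = Fintype.card V) :
    (∀ e ∈ G.edgeFinset, ∃ v, v ≠ r ∧ e = s(v, par v)) ∧
      ∀ (f : Sym2 V → ℕ) (v : V), G.vertexSum f v =
        ∑ u with u ≠ r ∧ (u = v ∨ par u = v), f s(u, par u) := by
  have himg : (Finset.univ.erase r).image (fun v => s(v, par v)) = G.edgeFinset := by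
    apply Finset.eq_of_subset_of_card_le
    · intro e he
      obtain ⟨v, hv, rfl⟩ := Finset.mem_image.1 he
      simpa using hadj v (Finset.ne_of_mem_erase hv)
    · rw [Finset.card_image_of_injOn, Finset.card_erase_of_mem (Finset.mem_univ r),
        Finset.card_univ]
      · omega
      · intro u hu v hv huv
        exact hinj u v (Finset.ne_of_mem_erase hu) (Finset.ne_of_mem_erase hv) huv
  refine ⟨fun e he => ?_, fun f v => ?_⟩
  · rw [← himg] at he
    obtain ⟨v, hv, rfl⟩ := Finset.mem_image.1 he
    exact ⟨v, Finset.ne_of_mem_erase hv, rfl⟩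
  · have h : G.incidenceFinset v = (Finset.univ.filter
        (fun u => u ≠ r ∧ (u = v ∨ par u = v))).image (fun u => s(u, par u)) := by
      rw [incidenceFinset_eq_filter, ← himg]
      ext e
      simp only [Finset.mem_filter, Finset.mem_image, Finset.mem_erase, Finset.mem_univ,
        and_true, true_and]
      constructor
      · rintro ⟨⟨u, hu, rfl⟩, hv⟩
        rw [Sym2.mem_iff] at hv
        exact ⟨u, ⟨hu, hv.imp Eq.symm Eq.symm⟩, rfl⟩
      · rintro ⟨u, ⟨hu, hv⟩, rfl⟩
        exact ⟨⟨u, hu, rfl⟩, Sym2.mem_iff.2 (hv.imp Eq.symm Eq.symm)⟩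
    rw [SimpleGraph.vertexSum, h, Finset.sum_image]
    intro a ha b hb hab
    simp only [Finset.coe_filter, Finset.mem_univ, true_and, Set.mem_ofPred_eq] at ha hb
    exact hinj a b ha.1 hb.1 hab

/-! ### Labelling the path -/

/-- The label of the `j`-th path edge, `0 ≤ j ≤ s`, in a caterpillar with `m` edges and a spine of
order `s`: the even positions use the labels `s / 2 + 1, s / 2, …, 1` and the odd positions use
`m, m - 1, …`. -/
def pathLabel (s m j : ℕ) : ℕ := if j % 2 = 0 then s / 2 + 1 - j / 2 else m - j / 2

lemma pathLabel_inj {s m i j : ℕ} (hm : s + 1 ≤ m) (hi : i ≤ s) (hj : j ≤ s)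
    (h : pathLabel s m i = pathLabel s m j) : i = j := by
  unfold pathLabel at h
  split_ifs at h <;> omega

lemma pathLabel_range {s m j : ℕ} (hm : s + 1 ≤ m) (hj : j ≤ s) :
    (1 ≤ pathLabel s m j ∧ pathLabel s m j ≤ s / 2 + 1) ∨
      (m < pathLabel s m j + (s + 1) / 2 ∧ pathLabel s m j ≤ m) := by
  unfold pathLabel
  split_ifs <;> omega

lemma pathLabel_add {s m j : ℕ} (hm : s + 1 ≤ m) (h1 : 1 ≤ j) (hj : j ≤ s) :
    pathLabel s m (j - 1) + pathLabel s m j + j = m + s / 2 + 2 := by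
  unfold pathLabel
  split_ifs <;> omega

/-! ### The labelling of the caterpillar -/

/-- The theorem for a caterpillar presented by a longest path `P 0, …, P (s + 1)`: each vertex off
the path is adjacent to an inner vertex of the path, and the graph is a tree by its edge count. -/
lemma isAntimagic_of_path [Fintype V] (G : SimpleGraph V) (s : ℕ) (hs : 1 ≤ s) (P : ℕ → V)
    (hP : Set.InjOn P (Set.Iic (s + 1))) (hPadj : ∀ j ≤ s, G.Adj (P j) (P (j + 1)))
    (hoff : ∀ v, (∀ j ≤ s + 1, v ≠ P j) → ∃ j, 1 ≤ j ∧ j ≤ s ∧ G.Adj v (P j))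
    (hcard : G.edgeFinset.card + 1 = Fintype.card V)
    (hE : (s - 1) / 2 - 1 ≤ G.leavesExcess) : G.IsAntimagic 0 := by
  have hV : Nonempty V := ⟨P 0⟩
  have hPi : ∀ {a b}, a ≤ s + 1 → b ≤ s + 1 → P a = P b → a = b :=
    fun ha hb h => hP ha hb h
  choose! idx hidx1 hidxs hidxadj using hoff
  set Q : Finset V := Finset.univ.filter (fun v => ∀ j ≤ s + 1, v ≠ P j) with hQ
  have hmemQ : ∀ v, v ∈ Q ↔ ∀ j ≤ s + 1, v ≠ P j := fun v => by simp [hQ]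
  have hPQ : ∀ j ≤ s + 1, P j ∉ Q := fun j hj h => (hmemQ _).1 h j hj rfl
  have hcases : ∀ v, v ∈ Q ∨ ∃ j ≤ s + 1, v = P j := by
    intro v
    by_cases h : v ∈ Q
    · exact Or.inl h
    · rw [hmemQ] at h
      push Not at h
      exact Or.inr h
  -- Position on the path, and parents in the tree rooted at `P 0`.
  obtain ⟨pos, hpos⟩ : ∃ pos : V → ℕ, ∀ j ≤ s + 1, pos (P j) = j :=
    ⟨Function.invFunOn P (Set.Iic (s + 1)), fun j hj => hP.leftInvOn_invFunOn hj⟩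
  obtain ⟨par, hparQ, hparP⟩ : ∃ par : V → V, (∀ v ∈ Q, par v = P (idx v)) ∧
      ∀ j ≤ s, par (P (j + 1)) = P j := by
    refine ⟨fun v => if v ∈ Q then P (idx v) else P (pos v - 1), fun v hv => by simp [hv], ?_⟩
    intro j hj
    simp [hPQ (j + 1) (by omega), hpos (j + 1) (by omega)]
  have hcases' : ∀ v, v ≠ P 0 → v ∈ Q ∨ ∃ j ≤ s, v = P (j + 1) := by
    intro v hv
    rcases hcases v with h | ⟨j, hj, rfl⟩
    · exact Or.inl h
    · cases j with
      | zero => exact absurd rfl hv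
      | succ j => exact Or.inr ⟨j, by omega, rfl⟩
  have hQidx : ∀ v ∈ Q, 1 ≤ idx v ∧ idx v ≤ s :=
    fun v hv => ⟨hidx1 v ((hmemQ v).1 hv), hidxs v ((hmemQ v).1 hv)⟩
  have hparnQ : ∀ v, v ≠ P 0 → par v ∉ Q := by
    intro v hv
    rcases hcases' v hv with h | ⟨j, hj, rfl⟩
    · rw [hparQ v h]
      exact hPQ _ (by have := hQidx v h; omega)
    · rw [hparP j hj]
      exact hPQ _ (by omega)
  have hparadj : ∀ v, v ≠ P 0 → G.Adj v (par v) := by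
    intro v hv
    rcases hcases' v hv with h | ⟨j, hj, rfl⟩
    · rw [hparQ v h]
      exact hidxadj v ((hmemQ v).1 h)
    · rw [hparP j hj]
      exact (hPadj j hj).symm
  have hεinj : ∀ u v, u ≠ P 0 → v ≠ P 0 → s(u, par u) = s(v, par v) → u = v := by
    intro u v hu hv huv
    rw [Sym2.eq_iff] at huv
    rcases huv with h | ⟨h1, h2⟩
    · exact h.1
    · exfalso
      rcases hcases' u hu with h | ⟨j, hj, rfl⟩
      · exact hparnQ v hv (h1 ▸ h)
      · rcases hcases' v hv with h | ⟨k, hk, rfl⟩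
        · exact hparnQ _ hu (h2.symm ▸ h)
        · rw [hparP k hk] at h1
          rw [hparP j hj] at h2
          have := hPi (by omega) (by omega) h1
          have := hPi (by omega) (by omega) h2
          omega
  obtain ⟨hedge, hvs⟩ := vertexSum_eq_sum_children G (P 0) par hparadj hεinj hcard
  -- The vertex itself and its children.
  have hSQ : ∀ v ∈ Q, Finset.univ.filter (fun u => u ≠ P 0 ∧ (u = v ∨ par u = v)) = {v} := by
    intro v hv
    ext u
    simp only [Finset.mem_filter, Finset.mem_univ, true_and, Finset.mem_singleton]
    constructor
    · rintro ⟨h, rfl | h'⟩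
      · rfl
      · exact absurd (h' ▸ hv) (hparnQ u h)
    · rintro rfl
      exact ⟨fun h => hPQ 0 (by omega) (h ▸ hv), Or.inl rfl⟩
  have hS0 : Finset.univ.filter (fun u => u ≠ P 0 ∧ (u = P 0 ∨ par u = P 0)) = {P 1} := by
    ext u
    simp only [Finset.mem_filter, Finset.mem_univ, true_and, Finset.mem_singleton]
    constructor
    · rintro ⟨h, h' | h'⟩
      · exact absurd h' h
      · rcases hcases' u h with hq | ⟨j, hj, rfl⟩
        · rw [hparQ u hq] at h'
          have := hQidx u hq
          have := hPi (by omega) (by omega) h'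
          omega
        · rw [hparP j hj] at h'
          have := hPi (by omega) (by omega) h'
          rw [this]
    · rintro rfl
      refine ⟨fun h => ?_, Or.inr (hparP 0 (by omega))⟩
      have := hPi (by omega) (by omega) h
      omega
  have hSs : Finset.univ.filter (fun u => u ≠ P 0 ∧ (u = P (s + 1) ∨ par u = P (s + 1))) =
      {P (s + 1)} := by
    ext u
    simp only [Finset.mem_filter, Finset.mem_univ, true_and, Finset.mem_singleton]
    constructor
    · rintro ⟨h, h' | h'⟩
      · exact h'
      · exfalso
        rcases hcases' u h with hq | ⟨j, hj, rfl⟩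
        · rw [hparQ u hq] at h'
          have := hQidx u hq
          have := hPi (by omega) (by omega) h'
          omega
        · rw [hparP j hj] at h'
          have := hPi (by omega) (by omega) h'
          omega
    · rintro rfl
      refine ⟨fun h => ?_, Or.inl rfl⟩
      have := hPi (by omega) (by omega) h
      omega
  have hSP : ∀ j, 1 ≤ j → j ≤ s →
      Finset.univ.filter (fun u => u ≠ P 0 ∧ (u = P j ∨ par u = P j)) =
        insert (P j) (insert (P (j + 1)) (Q.filter (fun u => idx u = j))) := by
    intro j hj1 hjs
    ext u
    simp only [Finset.mem_filter, Finset.mem_univ, true_and, Finset.mem_insert]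
    constructor
    · rintro ⟨h, h' | h'⟩
      · exact Or.inl h'
      · rcases hcases' u h with hq | ⟨k, hk, rfl⟩
        · rw [hparQ u hq] at h'
          have := hQidx u hq
          exact Or.inr (Or.inr ⟨hq, hPi (by omega) (by omega) h'⟩)
        · rw [hparP k hk] at h'
          have := hPi (by omega) (by omega) h'
          exact Or.inr (Or.inl (by rw [this]))
    · rintro (rfl | rfl | ⟨hq, rfl⟩)
      · refine ⟨fun h => ?_, Or.inl rfl⟩
        have := hPi (by omega) (by omega) h
        omega
      · refine ⟨fun h => ?_, Or.inr (hparP j hjs)⟩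
        have := hPi (by omega) (by omega) h
        omega
      · exact ⟨fun h => hPQ 0 (by omega) (h ▸ hq), Or.inr (hparQ u hq)⟩
  have hsumP : ∀ (F : V → ℕ) (j : ℕ), 1 ≤ j → j ≤ s →
      ∑ u with u ≠ P 0 ∧ (u = P j ∨ par u = P j), F u =
        F (P j) + F (P (j + 1)) + ∑ u ∈ Q with idx u = j, F u := by
    intro F j hj1 hjs
    rw [hSP j hj1 hjs, Finset.sum_insert, Finset.sum_insert, add_assoc]
    · exact fun h => hPQ _ (by omega) (Finset.mem_filter.1 h).1
    · rw [Finset.mem_insert]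
      rintro (h | h)
      · have := hPi (by omega) (by omega) h
        omega
      · exact hPQ _ (by omega) (Finset.mem_filter.1 h).1
  -- The number of edges.
  set m := G.edgeFinset.card with hm
  have hmQ : m = s + 1 + Q.card := by
    have h1 : Finset.univ.filter (fun v => ¬ ∀ j ≤ s + 1, v ≠ P j) =
        (Finset.range (s + 2)).image P := by
      ext v
      simp only [Finset.mem_filter, Finset.mem_univ, true_and, Finset.mem_image, Finset.mem_range]
      push Not
      exact ⟨fun ⟨j, hj, h⟩ => ⟨j, by omega, h.symm⟩, fun ⟨j, hj, h⟩ => ⟨j, by omega, h.symm⟩⟩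
    have h2 : ((Finset.range (s + 2)).image P).card = s + 2 := by
      rw [Finset.card_image_of_injOn, Finset.card_range]
      intro a ha b hb hab
      have ha' := Finset.mem_range.1 ha
      have hb' := Finset.mem_range.1 hb
      exact hPi (by omega) (by omega) hab
    have h3 : Q.card + (Finset.univ.filter (fun v => ¬ ∀ j ≤ s + 1, v ≠ P j)).card =
        Fintype.card V := by
      rw [hQ, ← Finset.card_univ]
      convert Finset.card_filter_add_card_filter_not (s := (Finset.univ : Finset V))
        (fun v => ∀ j ≤ s + 1, v ≠ P j)
    rw [h1, h2] at h3
    omega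
  -- The leaves excess counts the leaves off the path that are not selected.
  set H := Q.image idx with hH
  have hdeg : ∀ v, G.degree v = ∑ u with u ≠ P 0 ∧ (u = v ∨ par u = v), 1 := by
    intro v
    rw [← hvs (fun _ => 1) v, SimpleGraph.vertexSum, Finset.sum_const, smul_eq_mul, mul_one,
      card_incidenceFinset_eq_degree]
  have hEle : G.leavesExcess ≤ Q.card - H.card := by
    have hdegP : ∀ j, 1 ≤ j → j ≤ s →
        G.degree (P j) = 2 + (Q.filter (fun u => idx u = j)).card := by
      intro j h1 h2
      rw [hdeg, hsumP _ j h1 h2]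
      simp
    have hHs : ∀ j ∈ H, 1 ≤ j ∧ j ≤ s := by
      intro j hj
      obtain ⟨u, hu, rfl⟩ := Finset.mem_image.1 hj
      exact hQidx u hu
    have hfib : ∀ j ∈ H, 1 ≤ (Q.filter (fun u => idx u = j)).card := by
      intro j hj
      obtain ⟨u, hu, rfl⟩ := Finset.mem_image.1 hj
      exact Finset.card_pos.2 ⟨u, Finset.mem_filter.2 ⟨hu, rfl⟩⟩
    have hsub : Finset.univ.filter (fun v => 4 ≤ G.degree v) ⊆ H.image P := by
      intro v hv
      have hv4 : 4 ≤ G.degree v := by simpa using hv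
      rcases hcases v with h | ⟨j, hj, rfl⟩
      · rw [hdeg, hSQ v h] at hv4
        simp at hv4
      · rcases Nat.eq_zero_or_pos j with rfl | h1
        · rw [hdeg, hS0] at hv4
          simp at hv4
        · rcases Nat.lt_or_ge s j with h2 | h2
          · obtain rfl : j = s + 1 := by omega
            rw [hdeg, hSs] at hv4
            simp at hv4
          · rw [hdegP j h1 h2] at hv4
            obtain ⟨u, hu⟩ := Finset.card_pos.1
              (show 0 < (Q.filter (fun u => idx u = j)).card by omega)
            obtain ⟨hu1, hu2⟩ := Finset.mem_filter.1 hu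
            exact Finset.mem_image_of_mem _ (hu2 ▸ Finset.mem_image_of_mem _ hu1)
    have hle : G.leavesExcess ≤ ∑ j ∈ H, ((Q.filter (fun u => idx u = j)).card - 1) := by
      calc G.leavesExcess ≤ ∑ v ∈ H.image P, (G.degree v - 3) :=
            Finset.sum_le_sum_of_subset hsub
        _ = ∑ j ∈ H, (G.degree (P j) - 3) := by
            apply Finset.sum_image
            intro a ha b hb hab
            have ha' := hHs a ha
            have hb' := hHs b hb
            exact hPi (by omega) (by omega) hab
        _ = _ := by
            refine Finset.sum_congr rfl fun j hj => ?_
            rw [hdegP j (hHs j hj).1 (hHs j hj).2]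
            omega
    have htot : ∑ j ∈ H, ((Q.filter (fun u => idx u = j)).card - 1) + H.card = Q.card := by
      rw [Finset.card_eq_sum_card_image idx Q, Finset.card_eq_sum_ones H,
        ← Finset.sum_add_distrib]
      refine Finset.sum_congr rfl fun j hj => ?_
      have := hfib j hj
      omega
    omega
  -- The labels of the edges, indexed by their lower ends.
  obtain ⟨g, hginj, hgrange, hgsum, hgbig⟩ := exists_leaf_labels Q idx
    (fun j => pathLabel s m (j - 1) + pathLabel s m j) (s / 2 + 1)
  rw [← hH] at hgsum hgbig
  have hsm : s + 1 ≤ m := by omega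
  obtain ⟨lab, hlabQ, hlabP⟩ : ∃ lab : V → ℕ, (∀ v ∈ Q, lab v = g v) ∧
      ∀ j ≤ s, lab (P (j + 1)) = pathLabel s m j := by
    refine ⟨fun v => if v ∈ Q then g v else pathLabel s m (pos v - 1), fun v hv => by simp [hv], ?_⟩
    intro j hj
    simp [hPQ (j + 1) (by omega), hpos (j + 1) (by omega)]
  obtain ⟨f, hf⟩ : ∃ f : Sym2 V → ℕ, ∀ v, v ≠ P 0 → f s(v, par v) = lab v := by
    have hinj : Set.InjOn (fun v => s(v, par v)) {v | v ≠ P 0} :=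
      fun u hu v hv huv => hεinj u v hu hv huv
    refine ⟨fun e => lab (Function.invFunOn (fun v => s(v, par v)) {v | v ≠ P 0} e), ?_⟩
    intro v hv
    exact congrArg lab (hinj.leftInvOn_invFunOn hv)
  have hvs' : ∀ v, G.vertexSum f v = ∑ u with u ≠ P 0 ∧ (u = v ∨ par u = v), lab u := by
    intro v
    rw [hvs]
    exact Finset.sum_congr rfl fun u hu => hf u (Finset.mem_filter.1 hu).2.1
  have hlabrange : ∀ v, v ≠ P 0 → 1 ≤ lab v ∧ lab v ≤ m := by
    intro v hv
    rcases hcases' v hv with h | ⟨j, hj, rfl⟩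
    · rw [hlabQ v h]
      have := hgrange v h
      omega
    · rw [hlabP j hj]
      have := pathLabel_range hsm hj
      omega
  have hlabinj : ∀ u v, u ≠ P 0 → v ≠ P 0 → lab u = lab v → u = v := by
    intro u v hu hv huv
    rcases hcases' u hu with h | ⟨j, hj, rfl⟩ <;> rcases hcases' v hv with h' | ⟨k, hk, rfl⟩
    · rw [hlabQ u h, hlabQ v h'] at huv
      exact hginj h h' huv
    · rw [hlabQ u h, hlabP k hk] at huv
      have := hgrange u h
      have := pathLabel_range hsm hk
      omega
    · rw [hlabQ v h', hlabP j hj] at huv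
      have := hgrange v h'
      have := pathLabel_range hsm hj
      omega
    · rw [hlabP j hj, hlabP k hk] at huv
      rw [pathLabel_inj hsm hj hk huv]
  -- The vertex sums.
  have hσQ : ∀ v ∈ Q, G.vertexSum f v = g v := by
    intro v hv
    rw [hvs', hSQ v hv, Finset.sum_singleton, hlabQ v hv]
  have hσ0 : G.vertexSum f (P 0) = s / 2 + 1 := by
    rw [hvs', hS0, Finset.sum_singleton, hlabP 0 (by omega)]
    simp [pathLabel]
  have hσs : G.vertexSum f (P (s + 1)) = pathLabel s m s := by
    rw [hvs', hSs, Finset.sum_singleton, hlabP s le_rfl]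
  have hσP : ∀ j, 1 ≤ j → j ≤ s → G.vertexSum f (P j) =
      pathLabel s m (j - 1) + pathLabel s m j + ∑ u ∈ Q with idx u = j, g u := by
    intro j h1 h2
    have h3 : lab (P j) = pathLabel s m (j - 1) := by
      have := hlabP (j - 1) (by omega)
      rwa [Nat.sub_add_cancel h1] at this
    rw [hvs', hsumP _ j h1 h2, hlabP j h2, h3]
    congr 1
    exact Finset.sum_congr rfl fun u hu => hlabQ u (Finset.mem_filter.1 hu).1
  have hlight : ∀ j, 1 ≤ j → j ≤ s → j ∉ H → G.vertexSum f (P j) + j = m + s / 2 + 2 := by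
    intro j h1 h2 h3
    have h4 : Q.filter (fun u => idx u = j) = ∅ := by
      rw [Finset.filter_eq_empty_iff]
      intro u hu h
      exact h3 (h ▸ Finset.mem_image_of_mem _ hu)
    rw [hσP j h1 h2, h4, Finset.sum_empty, add_zero, pathLabel_add hsm h1 h2]
  have hheavy : ∀ j, 1 ≤ j → j ≤ s → j ∈ H → m + s / 2 + 1 < G.vertexSum f (P j) := by
    intro j h1 h2 h3
    obtain ⟨u, hu, huj, hub⟩ := hgbig j h3
    have h4 : g u ≤ ∑ u ∈ Q with idx u = j, g u :=
      Finset.single_le_sum (fun _ _ => Nat.zero_le _) (Finset.mem_filter.2 ⟨hu, huj⟩)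
    have h5 := pathLabel_add hsm h1 h2
    rw [hσP j h1 h2]
    omega
  have hlast : (s % 2 = 0 ∧ pathLabel s m s = 1) ∨
      (s % 2 = 1 ∧ pathLabel s m s + s / 2 = m) := by
    unfold pathLabel
    split_ifs <;> omega
  have hleafrange : ∀ v ∈ Q, s / 2 + 2 ≤ G.vertexSum f v ∧ G.vertexSum f v + (s + 1) / 2 ≤ m := by
    intro v hv
    rw [hσQ v hv]
    have := hgrange v hv
    omega
  have hspine : ∀ j, 1 ≤ j → j ≤ s → m + s / 2 + 2 ≤ G.vertexSum f (P j) + s := by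
    intro j h1 h2
    by_cases h : j ∈ H
    · have := hheavy j h1 h2 h
      omega
    · have := hlight j h1 h2 h
      omega
  have hclass : ∀ v, v ∈ Q ∨ v = P 0 ∨ v = P (s + 1) ∨ ∃ j, 1 ≤ j ∧ j ≤ s ∧ v = P j := by
    intro v
    rcases hcases v with h | ⟨j, hj, rfl⟩
    · exact Or.inl h
    · rcases Nat.eq_zero_or_pos j with rfl | h1
      · exact Or.inr (Or.inl rfl)
      · rcases Nat.lt_or_ge s j with h2 | h2
        · obtain rfl : j = s + 1 := by omega
          exact Or.inr (Or.inr (Or.inl rfl))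
        · exact Or.inr (Or.inr (Or.inr ⟨j, h1, h2, rfl⟩))
  refine ⟨f, fun e he => ?_, fun e he e' he' hee => ?_, fun u v huv => ?_⟩
  · obtain ⟨v, hv, rfl⟩ := hedge e he
    rw [hf v hv, Finset.mem_Icc]
    exact hlabrange v hv
  · obtain ⟨u, hu, rfl⟩ := hedge e he
    obtain ⟨v, hv, rfl⟩ := hedge e' he'
    rw [hf u hu, hf v hv] at hee
    rw [hlabinj u v hu hv hee]
  · rcases hclass u with hu | rfl | rfl | ⟨j, hj1, hjs, rfl⟩ <;>
      rcases hclass v with hv | rfl | rfl | ⟨k, hk1, hks, rfl⟩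
    · rw [hσQ u hu, hσQ v hv] at huv
      exact hginj hu hv huv
    · have := hleafrange u hu
      omega
    · have := hleafrange u hu
      omega
    · have := hleafrange u hu
      have := hspine k hk1 hks
      omega
    · have := hleafrange v hv
      omega
    · rfl
    · omega
    · have := hspine k hk1 hks
      omega
    · have := hleafrange v hv
      omega
    · omega
    · rfl
    · have := hspine k hk1 hks
      omega
    · have := hleafrange v hv
      have := hspine j hj1 hjs
      omega
    · have := hspine j hj1 hjs
      omega
    · have := hspine j hj1 hjs
      omega
    · by_cases h1 : j ∈ H <;> by_cases h2 : k ∈ H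
      · rw [hσP j hj1 hjs, hσP k hk1 hks] at huv
        rw [hgsum h1 h2 huv]
      · have := hheavy j hj1 hjs h1
        have := hlight k hk1 hks h2
        omega
      · have := hlight j hj1 hjs h1
        have := hheavy k hk1 hks h2
        omega
      · have := hlight j hj1 hjs h1
        have := hlight k hk1 hks h2
        rw [show j = k by omega]

/-! ### The structure of caterpillars -/

lemma two_le_degree_of_adj_of_three_le_card [Fintype V] (G : SimpleGraph V) (hG : G.Connected)
    (hcard : 3 ≤ Fintype.card V) {a b : V} (hab : G.Adj a b) (ha : ¬ 2 ≤ G.degree a) :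
    2 ≤ G.degree b := by
  by_contra hb
  -- Two adjacent leaves would form a connected component.
  have huniq : ∀ {x y z : V}, ¬ 2 ≤ G.degree x → G.Adj x y → G.Adj x z → z = y := by
    intro x y z hx hy hz
    rw [← card_neighborFinset_eq_degree, not_le] at hx
    exact Finset.card_le_one.1 (Nat.le_of_lt_succ hx) z (by simpa using hz) y (by simpa using hy)
  have hreach : ∀ w, G.Reachable a w → w = a ∨ w = b := by
    intro w hw
    rw [reachable_iff_reflTransGen] at hw
    induction hw with
    | refl => exact Or.inl rfl
    | tail _ hcd ih =>
      rcases ih with rfl | rfl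
      · exact Or.inr (huniq ha hab hcd)
      · exact Or.inl (huniq hb hab.symm hcd)
  have hsub : (Finset.univ : Finset V) ⊆ {a, b} := by
    intro w _
    simpa using hreach w (hG.preconnected a w)
  have h1 := Finset.card_le_card hsub
  have h2 := Finset.card_le_two (a := a) (b := b)
  rw [Finset.card_univ] at h1
  omega

lemma exists_adj_ne_of_two_le_degree [Fintype V] (G : SimpleGraph V) {v : V}
    (hv : 2 ≤ G.degree v) (a : V) : ∃ b, G.Adj v b ∧ b ≠ a := by
  rw [← card_neighborFinset_eq_degree] at hv
  obtain ⟨b, hb, hne⟩ := Finset.exists_mem_ne hv a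
  exact ⟨b, by simpa using hb, hne⟩

/-- The longest path of a caterpillar: its spine, prolonged by a leaf at each end. -/
lemma exists_longest_path [Fintype V] (G : SimpleGraph V) (hC : G.IsCaterpillar) :
    1 ≤ G.spineOrder ∧ ∃ P : ℕ → V, Set.InjOn P (Set.Iic (G.spineOrder + 1)) ∧
      (∀ j ≤ G.spineOrder, G.Adj (P j) (P (j + 1))) ∧
      ∀ v, (∀ j ≤ G.spineOrder + 1, v ≠ P j) → ∃ j, 1 ≤ j ∧ j ≤ G.spineOrder ∧ G.Adj v (P j) := by
  obtain ⟨hT, hcard, ⟨φ⟩⟩ := hC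
  set n := G.spineOrder with hn
  have hnt : Nontrivial V := Fintype.one_lt_card_iff_nontrivial.1 (by omega)
  have hnbr : ∀ v, ∃ b, G.Adj v b := by
    intro v
    exact (G.degree_pos_iff_exists_adj v).1
      (hT.connected.preconnected.degree_pos_of_nontrivial v)
  have hleaf : ∀ {a b : V}, G.Adj a b → ¬ 2 ≤ G.degree a → 2 ≤ G.degree b :=
    fun h1 h2 => two_le_degree_of_adj_of_three_le_card G hT.connected hcard h1 h2
  -- The spine is `w 0, …, w (n - 1)`.
  obtain ⟨w, hwdeg, hwsurj, hwinj, hwadj⟩ : ∃ w : ℕ → V, (∀ i < n, 2 ≤ G.degree (w i)) ∧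
      (∀ v, 2 ≤ G.degree v → ∃ i < n, v = w i) ∧
      (∀ i < n, ∀ k < n, w i = w k → i = k) ∧
      ∀ i < n, ∀ k < n, (G.Adj (w i) (w k) ↔ i + 1 = k ∨ k + 1 = i) := by
    have hV : Nonempty V := hnt.to_nonempty
    refine ⟨fun i => if h : i < n then (φ.symm ⟨i, h⟩ : V) else hV.some, ?_, ?_, ?_, ?_⟩
    · intro i hi
      change (if h : i < n then (φ.symm ⟨i, h⟩ : V) else hV.some) ∈ G.spine
      rw [dif_pos hi]
      exact (φ.symm ⟨i, hi⟩).2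
    · intro v hv
      refine ⟨φ ⟨v, hv⟩, (φ ⟨v, hv⟩).2, ?_⟩
      simp
    · intro i hi k hk h
      simp only [hi, hk, dif_pos] at h
      have := φ.symm.injective (Subtype.ext h)
      simpa using this
    · intro i hi k hk
      simp only [hi, hk, dif_pos]
      rw [← SimpleGraph.induce_adj, φ.symm.map_adj_iff, pathGraph_adj]
  have hn1 : 1 ≤ n := by
    obtain ⟨a⟩ := hnt.to_nonempty
    obtain ⟨b, hab⟩ := hnbr a
    by_cases ha : 2 ≤ G.degree a
    · obtain ⟨i, hi, -⟩ := hwsurj a ha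
      omega
    · obtain ⟨i, hi, -⟩ := hwsurj b (hleaf hab ha)
      omega
  -- The end leaves `x` and `y`; they have to be chosen distinct if the spine is a single vertex.
  obtain ⟨x, hx, hxw⟩ := exists_adj_ne_of_two_le_degree G (hwdeg 0 (by omega)) (w 1)
  have hxdeg : ¬ 2 ≤ G.degree x := by
    intro h
    obtain ⟨i, hi, rfl⟩ := hwsurj x h
    rcases (hwadj 0 (by omega) i hi).1 hx with h | h
    · exact hxw (by rw [← h])
    · omega
  obtain ⟨y, hy, hyw⟩ := exists_adj_ne_of_two_le_degree G (hwdeg (n - 1) (by omega))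
    (if n = 1 then x else w (n - 2))
  have hydeg : ¬ 2 ≤ G.degree y := by
    intro h
    obtain ⟨i, hi, rfl⟩ := hwsurj y h
    rcases (hwadj (n - 1) (by omega) i hi).1 hy with h | h
    · omega
    · rw [if_neg (by omega)] at hyw
      exact hyw (by rw [show i = n - 2 by omega])
  have hxy : x ≠ y := by
    rintro rfl
    by_cases h1 : n = 1
    · rw [if_pos h1] at hyw
      exact hyw rfl
    · obtain ⟨b, hb, hne⟩ : ∃ b, G.Adj x b ∧ b ≠ w 0 :=
        ⟨w (n - 1), hy.symm, fun h => by
          have := hwinj _ (by omega) _ (by omega) h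
          omega⟩
      apply hxdeg
      rw [← card_neighborFinset_eq_degree]
      exact Finset.one_lt_card.2 ⟨b, by simpa using hb, w 0, by simpa using hx.symm, hne⟩
  have hwx : ∀ i < n, w i ≠ x := fun i hi h => hxdeg (h ▸ hwdeg i hi)
  have hwy : ∀ i < n, w i ≠ y := fun i hi h => hydeg (h ▸ hwdeg i hi)
  obtain ⟨P, hP0, hPw, hPy⟩ : ∃ P : ℕ → V, P 0 = x ∧ (∀ i < n, P (i + 1) = w i) ∧
      P (n + 1) = y := by
    refine ⟨fun j => if j = 0 then x else if j ≤ n then w (j - 1) else y, by simp, ?_, by simp⟩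
    intro i hi
    simp [show i + 1 ≤ n by omega]
  have hclass : ∀ j ≤ n + 1, j = 0 ∨ j = n + 1 ∨ ∃ i < n, j = i + 1 := by
    intro j hj
    by_cases h0 : j = 0
    · exact Or.inl h0
    · by_cases h1 : j = n + 1
      · exact Or.inr (Or.inl h1)
      · exact Or.inr (Or.inr ⟨j - 1, by omega, by omega⟩)
  refine ⟨hn1, P, ?_, ?_, ?_⟩
  · intro a ha b hb hab
    rcases hclass a ha with rfl | rfl | ⟨i, hi, rfl⟩ <;>
      rcases hclass b hb with rfl | rfl | ⟨k, hk, rfl⟩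
    · rfl
    · rw [hP0, hPy] at hab
      exact absurd hab hxy
    · rw [hP0, hPw k hk] at hab
      exact absurd hab.symm (hwx k hk)
    · rw [hP0, hPy] at hab
      exact absurd hab.symm hxy
    · rfl
    · rw [hPy, hPw k hk] at hab
      exact absurd hab.symm (hwy k hk)
    · rw [hP0, hPw i hi] at hab
      exact absurd hab (hwx i hi)
    · rw [hPy, hPw i hi] at hab
      exact absurd hab (hwy i hi)
    · rw [hPw i hi, hPw k hk] at hab
      rw [hwinj i hi k hk hab]
  · intro j hj
    rcases hclass j (by omega) with rfl | rfl | ⟨i, hi, rfl⟩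
    · rw [hP0, hPw 0 (by omega)]
      exact hx.symm
    · omega
    · rw [hPw i hi]
      rcases Nat.lt_or_ge (i + 1) n with h | h
      · rw [hPw (i + 1) h]
        exact (hwadj i hi (i + 1) h).2 (Or.inl rfl)
      · obtain rfl : i = n - 1 := by omega
        rw [show n - 1 + 1 + 1 = n + 1 by omega, hPy]
        exact hy
  · intro v hv
    have hvdeg : ¬ 2 ≤ G.degree v := by
      intro h
      obtain ⟨i, hi, rfl⟩ := hwsurj v h
      exact hv (i + 1) (by omega) (hPw i hi).symm
    obtain ⟨b, hb⟩ := hnbr v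
    obtain ⟨i, hi, rfl⟩ := hwsurj b (hleaf hb hvdeg)
    exact ⟨i + 1, by omega, by omega, by rwa [hPw i hi]⟩

/-- A caterpillar with a spine of order `s` whose leaves excess is at least
`⌊(s-1)/2⌋ - 1` is antimagic. -/
theorem caterpillar_isAntimagic_of_leavesExcess [Fintype V] (G : SimpleGraph V)
    (hC : G.IsCaterpillar) (s : ℕ) (hs : s = G.spineOrder)
    (hE : (s - 1) / 2 - 1 ≤ G.leavesExcess) :
    G.IsAntimagic 0 := by
  subst hs
  obtain ⟨hs, P, hP, hPadj, hoff⟩ := exists_longest_path G hC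
  refine isAntimagic_of_path G _ hs P hP hPadj hoff ?_ hE
  convert hC.1.card_edgeFinset
end

section
/- Let C be a caterpillar whose spine has order s. If C has at least ⌊(3s+1)/2⌋ leaves, then C is antimagic. -/
/-!
Write `h = ⌊(s-1)/2⌋`, let `ℓ` be the number of leaves and put `B = h + ℓ + 1`, so that there are
`s - 1 + ℓ` edges. Along the spine, at positions `0, …, s - 1`, the edges receive alternately the
small labels `1, 2, …, h` and the large labels `B, B + 1, …, s - 1 + ℓ`, in such a way that the
last edge is large (`spineLabel`). The spine edges then contribute exactly `B + i` to the vertex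
sum at each interior position `i` (`spineSum_interior`). In particular the sums at spine vertices of
degree 2 without leaves are distinct and differ from the pendant labels, which are
`h + 1, …, h + ℓ`; the latter are also the vertex sums at the leaves.

At each spine vertex with leaves, one pendant edge is kept for last. The largest remaining pendant
labels go to these edges, in increasing order of the partial sums at their spine vertices, which
makes the sums at these vertices distinct (`exists_ranked_labels`). The hypothesis
`ℓ ≥ ⌊(3s+1)/2⌋` makes these labels at least `s`, so that the sums also exceed all the values
`B + i` with `i ≤ s - 2` (`exists_leaf_labels`).

For odd `s ≥ 3` the first spine edge is labelled `1`, and position `0` is treated separately: one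
of its pendant edges gets the label `B - 1`. If it is the only one there, the vertex sum is exactly
`B = B + 0`, which fits the pattern of the positions without leaves; otherwise another of its
pendant edges can be kept for last as above. The star `s = 1` is covered in the same way, with
contribution `0` from the spine. All of this arithmetic is in `exists_caterpillar_leaf_labels`.
-/

open Finset SimpleGraph
open scoped Classical

variable {V : Type*}

/-! ### Distributing labels over the leaves -/

/-- Given partial sums `P`, the labels `c + 1, …, c + #X` can be added to them, in nondecreasing
order of `P`, so that the total sums are distinct. -/
theorem exists_ranked_labels {α : Type*} (X : Finset α) (P : α → ℕ) (c : ℕ) :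
    ∃ r : α → ℕ, (∀ i ∈ X, c + 1 ≤ r i ∧ r i ≤ c + #X) ∧ Set.InjOn r X ∧
      Set.InjOn (fun i => P i + r i) X := by
  induction X using Finset.induction_on_max_value P with
  | empty => exact ⟨fun _ => 0, by simp, by simp, by simp⟩
  | insert a X ha hmax ih =>
    obtain ⟨r, hr, hinj, hsum⟩ := ih
    have hne : ∀ x ∈ X, x ≠ a := fun x hx h => ha (h ▸ hx)
    have hc : #(insert a X) = #X + 1 := Finset.card_insert_of_notMem ha
    refine ⟨Function.update r a (c + #X + 1), ?_, ?_, ?_⟩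
    · intro i hi
      rcases Finset.mem_insert.1 hi with rfl | hi
      · simp [hc]
      · have := hr i hi
        simp [hne i hi, hc]; omega
    · intro x hx y hy hxy
      rw [Finset.mem_coe, Finset.mem_insert] at hx hy
      rcases hx with rfl | hx <;> rcases hy with rfl | hy
      · rfl
      · have := hr y hy
        simp [hne y hy] at hxy; omega
      · have := hr x hx
        simp [hne x hx] at hxy; omega
      · simp only [Function.update_of_ne (hne x hx), Function.update_of_ne (hne y hy)] at hxy
        exact hinj hx hy hxy
    · intro x hx y hy hxy
      rw [Finset.mem_coe, Finset.mem_insert] at hx hy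
      rcases hx with rfl | hx <;> rcases hy with rfl | hy
      · rfl
      · have := hr y hy
        have := hmax y hy
        simp [hne y hy] at hxy; omega
      · have := hr x hx
        have := hmax x hx
        simp [hne x hx] at hxy; omega
      · simp only [Function.update_of_ne (hne x hx), Function.update_of_ne (hne y hy)] at hxy
        exact hsum hx hy hxy

/-- Labelling the pendant edges. Here `π v` is the position on the spine of the neighbour of the
leaf `v`, `b i` is the contribution of the spine edges to the sum at position `i`, and the labels
up to `h` and above `h + #L` belong to spine edges. The set `T` contains at most one leaf, which
gets the label `h + #L`. Positions with a leaf outside `T` are the flexible ones; `hb` says that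
every other position `i` has sum exactly `h + #L + 1 + i`. One leaf outside `T` at each flexible
position is kept for last and gets one of the largest labels, by `exists_ranked_labels`; `hb'` and
`hroom` then push the flexible sums above all the others. -/
theorem exists_leaf_labels_s3 {α : Type*} (L T : Finset α) (π : α → ℕ) (b : ℕ → ℕ) (s h : ℕ)
    (hπ : ∀ v ∈ L, π v < s) (hTL : T ⊆ L) (hT : #T ≤ 1)
    (hroom : 2 * s + #T ≤ h + #L + 1)
    (hb : ∀ i < s, (∀ v ∈ L, π v = i → v ∈ T) →
      i + 1 < s ∧ b i + #{v ∈ T | π v = i} * (h + #L) = h + #L + 1 + i)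
    (hb' : ∀ i < s, h + #L ≤ b i + #{v ∈ T | π v = i} * (h + #L)) :
    ∃ g : α → ℕ, (∀ v ∈ L, h + 1 ≤ g v ∧ g v ≤ h + #L) ∧ Set.InjOn g L ∧
      Set.InjOn (fun i => b i + ∑ v ∈ L with π v = i, g v) (Set.Iio s) ∧
      ∀ i < s, h + #L + 1 ≤ b i + ∑ v ∈ L with π v = i, g v := by
  -- `R` has exactly one leaf outside `T` at each flexible position
  obtain ⟨R, hRL, hRinj, hRim⟩ : ∃ R ⊆ L \ T, Set.InjOn π R ∧ R.image π = (L \ T).image π := by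
    obtain ⟨R, h1, h2, h3⟩ := Finset.exists_subset_injOn_image_eq_of_surjOn
      (f := π) (↑(L \ T)) ((L \ T).image π) (by simpa using Set.surjOn_image π _)
    exact ⟨R, by exact_mod_cast h1, h2, h3⟩
  have hRs : #R ≤ s := by
    rw [← Finset.card_image_of_injOn hRinj, ← Finset.card_range s]
    apply Finset.card_le_card
    intro i hi
    obtain ⟨v, hv, rfl⟩ := Finset.mem_image.1 hi
    exact Finset.mem_range.2 (hπ v (Finset.mem_sdiff.1 (hRL hv)).1)
  obtain ⟨O, hO⟩ : ∃ O, O = (L \ T) \ R := ⟨_, rfl⟩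
  have hOc : #O + #R + #T = #L := by
    have h1 := Finset.card_sdiff_add_card_eq_card hRL
    rw [← hO] at h1
    have h2 := Finset.card_sdiff_add_card_eq_card hTL
    omega
  have hTone : ∀ x ∈ T, ∀ y ∈ T, x = y := fun x hx y hy => Finset.card_le_one.1 hT x hx y hy
  have hTpos : ∀ x ∈ T, #T = 1 := fun x hx => le_antisymm hT (Finset.card_pos.2 ⟨x, hx⟩)
  obtain ⟨r₀, hr₀, hr₀inj, -⟩ := exists_ranked_labels O (fun _ => 0) h
  -- the labels of the leaves outside `R`, extended by `0`
  let g₁ : α → ℕ := fun v => if v ∈ T then h + #L else if v ∈ R then 0 else r₀ v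
  obtain ⟨r₁, hr₁, hr₁inj, hr₁sum⟩ := exists_ranked_labels R
    (fun v => b (π v) + ∑ w ∈ L with π w = π v, g₁ w) (h + #O)
  let g : α → ℕ := fun v => if v ∈ R then r₁ v else g₁ v
  have hRT : ∀ v ∈ R, v ∉ T := fun v hv => (Finset.mem_sdiff.1 (hRL hv)).2
  have hgR : ∀ v ∈ R, g v = r₁ v := fun v hv => by simp [g, hv]
  have hgT : ∀ v ∈ T, g v = h + #L := fun v hv => by
    have : v ∉ R := fun h => hRT v h hv
    simp [g, g₁, hv, this]
  have hgO : ∀ v ∈ O, g v = r₀ v := fun v hv => by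
    simp only [hO, Finset.mem_sdiff] at hv
    simp [g, g₁, hv]
  have hcases : ∀ v ∈ L, v ∈ T ∨ v ∈ R ∨ v ∈ O := fun v hv => by
    simp only [hO, Finset.mem_sdiff]; tauto
  have hsumR : ∀ v ∈ R, ∑ w ∈ L with π w = π v, g w
      = ∑ w ∈ L with π w = π v, g₁ w + r₁ v := by
    intro v hv
    have hvL := (Finset.mem_sdiff.1 (hRL hv)).1
    have key : ∀ w ∈ L.filter (fun w => π w = π v),
        g w = g₁ w + if w = v then r₁ v else 0 := by
      intro w hw
      have hw' := (Finset.mem_filter.1 hw).2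
      by_cases hwR : w ∈ R
      · have : w = v := hRinj hwR hv hw'
        subst this
        simp [g, g₁, hwR, hRT]
      · have : w ≠ v := fun h => hwR (h ▸ hv)
        simp [g, hwR, this]
    rw [Finset.sum_congr rfl key, Finset.sum_add_distrib, Finset.sum_ite_eq']
    simp [hvL]
  -- a position with a leaf in `R` has a sum above all the remaining ones
  have hbig : ∀ v ∈ R, h + #L + s ≤ b (π v) + ∑ w ∈ L with π w = π v, g w := by
    intro v hv
    rw [hsumR v hv]
    have h1 := hb' (π v) (hπ v (Finset.mem_sdiff.1 (hRL hv)).1)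
    have h2 := (hr₁ v hv).1
    have h3 : #{w ∈ T | π w = π v} * (h + #L) ≤ ∑ w ∈ L with π w = π v, g₁ w := by
      calc #{w ∈ T | π w = π v} * (h + #L) = ∑ w ∈ T with π w = π v, g₁ w := by
            rw [Finset.sum_congr rfl (g := fun _ => h + #L)]
            · simp
            · intro w hw
              simp [g₁, (Finset.mem_filter.1 hw).1]
        _ ≤ _ := Finset.sum_le_sum_of_subset (Finset.filter_subset_filter _ hTL)
    omega
  have hsmall : ∀ i < s, (∀ v ∈ R, π v ≠ i) →
      i + 1 < s ∧ b i + ∑ w ∈ L with π w = i, g w = h + #L + 1 + i := by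
    intro i hi hno
    have hall : ∀ v ∈ L, π v = i → v ∈ T := by
      intro v hv hvi
      by_contra hvT
      have : i ∈ R.image π := by
        rw [hRim]; exact Finset.mem_image.2 ⟨v, Finset.mem_sdiff.2 ⟨hv, hvT⟩, hvi⟩
      obtain ⟨w, hw, hwi⟩ := Finset.mem_image.1 this
      exact hno w hw hwi
    obtain ⟨h1, h2⟩ := hb i hi hall
    refine ⟨h1, ?_⟩
    rw [← h2]
    have : L.filter (fun w => π w = i) = T.filter (fun w => π w = i) := by
      ext w
      simp only [Finset.mem_filter]
      exact ⟨fun hw => ⟨hall w hw.1 hw.2, hw.2⟩, fun hw => ⟨hTL hw.1, hw.2⟩⟩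
    rw [this, Finset.sum_congr rfl (g := fun _ => h + #L)]
    · simp
    · intro w hw
      exact hgT w (Finset.mem_filter.1 hw).1
  refine ⟨g, ?_, ?_, ?_, ?_⟩
  · intro v hv
    rcases hcases v hv with hv' | hv' | hv'
    · rw [hgT v hv']; have : 0 < #L := Finset.card_pos.2 ⟨v, hv⟩; omega
    · rw [hgR v hv']; have := hr₁ v hv'; omega
    · rw [hgO v hv']; have := hr₀ v hv'; omega
  · intro x hx y hy hxy
    rcases hcases x hx with hx' | hx' | hx' <;> rcases hcases y hy with hy' | hy' | hy'
    · exact hTone x hx' y hy'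
    · rw [hgT x hx', hgR y hy'] at hxy
      have := hr₁ y hy'; have := hTpos x hx'; omega
    · rw [hgT x hx', hgO y hy'] at hxy
      have := hr₀ y hy'; have := hTpos x hx'; omega
    · rw [hgR x hx', hgT y hy'] at hxy
      have := hr₁ x hx'; have := hTpos y hy'; omega
    · rw [hgR x hx', hgR y hy'] at hxy
      exact hr₁inj hx' hy' hxy
    · rw [hgR x hx', hgO y hy'] at hxy
      have := hr₁ x hx'; have := hr₀ y hy'; omega
    · rw [hgO x hx', hgT y hy'] at hxy
      have := hr₀ x hx'; have := hTpos y hy'; omega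
    · rw [hgO x hx', hgR y hy'] at hxy
      have := hr₀ x hx'; have := hr₁ y hy'; omega
    · rw [hgO x hx', hgO y hy'] at hxy
      exact hr₀inj hx' hy' hxy
  · intro i hi j hj hij
    simp only [Set.mem_Iio] at hi hj
    simp only at hij
    by_cases hiR : ∃ v ∈ R, π v = i <;> by_cases hjR : ∃ v ∈ R, π v = j
    · obtain ⟨v, hv, rfl⟩ := hiR
      obtain ⟨w, hw, rfl⟩ := hjR
      rw [hsumR v hv, hsumR w hw, ← add_assoc, ← add_assoc] at hij
      rw [hr₁sum hv hw hij]
    · obtain ⟨v, hv, rfl⟩ := hiR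
      push Not at hjR
      have := hbig v hv; have := hsmall j hj hjR; omega
    · obtain ⟨v, hv, rfl⟩ := hjR
      push Not at hiR
      have := hbig v hv; have := hsmall i hi hiR; omega
    · push Not at hiR hjR
      have := hsmall i hi hiR; have := hsmall j hj hjR; omega
  · intro i hi
    by_cases hiR : ∃ v ∈ R, π v = i
    · obtain ⟨v, hv, rfl⟩ := hiR
      have := hbig v hv; omega
    · push Not at hiR
      have := hsmall i hi hiR; omega

/-! ### Vertex sums and the structure of caterpillars -/

theorem vertexSum_eq_sum_neighborFinset [Fintype V] (G : SimpleGraph V) (f : Sym2 V → ℕ) (v : V) :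
    G.vertexSum f v = ∑ w ∈ G.neighborFinset v, f s(v, w) := by
  unfold SimpleGraph.vertexSum
  symm
  apply Finset.sum_bij (fun w _ => s(v, w))
  · intro w hw
    simpa using hw
  · intro a _ b _ hab
    exact Sym2.congr_right.1 hab
  · intro e he
    rw [mem_incidenceFinset] at he
    obtain ⟨he, hv⟩ := he
    obtain ⟨w, rfl⟩ := hv
    exact ⟨w, by simpa using he, rfl⟩
  · intros; rfl

/-- The neighbour of a leaf lies on the spine: two adjacent leaves would form a whole connected
component, of order 2. -/
theorem two_le_degree_of_adj_leaf [Fintype V] {G : SimpleGraph V} (hG : G.Connected)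
    (hcard : 3 ≤ Fintype.card V) {l u : V} (hl : ∀ w, G.Adj l w ↔ w = u) : 2 ≤ G.degree u := by
  have : Nontrivial V := Fintype.one_lt_card_iff_nontrivial.1 (by omega)
  have hpos := hG.preconnected.degree_pos_of_nontrivial u
  by_contra hlt
  have h1 : G.degree u = 1 := by
    have h2 : G.degree u < 2 := not_le.1 hlt
    have h3 : 0 < G.degree u := by convert hpos
    omega
  obtain ⟨x, -, hx⟩ := degree_eq_one_iff_existsUnique_adj.1 h1
  have hlu : G.Adj l u := (hl u).2 rfl
  have hxl : ∀ w, G.Adj u w → w = l := fun w hw => (hx w hw).trans (hx l hlu.symm).symm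
  have hall : ∀ w, G.Reachable l w → w = l ∨ w = u := by
    intro w hw
    rw [reachable_iff_reflTransGen] at hw
    induction hw with
    | refl => exact Or.inl rfl
    | tail _ hbc ih =>
      rcases ih with rfl | rfl
      · exact Or.inr ((hl _).1 hbc)
      · exact Or.inl (hxl _ hbc)
  have huniv : (Finset.univ : Finset V) ⊆ {l, u} := fun w _ => by
    simpa using hall w (hG.preconnected l w)
  have := (Finset.card_le_card huniv).trans Finset.card_le_two
  rw [Finset.card_univ] at this
  omega

/-- Coordinates on a caterpillar: `idx` is the position of a spine vertex along the spine, and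
`par` sends a leaf to its neighbour. Values of `idx` off the spine and of `par` off the leaves
carry no information. The last clause counts the edges of the tree. -/
theorem SimpleGraph.IsCaterpillar.exists_coordinates [Fintype V] {G : SimpleGraph V}
    (hC : G.IsCaterpillar) : ∃ (idx : V → ℕ) (par : V → V),
      (∀ v, G.degree v = 1 ∨ 2 ≤ G.degree v) ∧
      (∀ l, G.degree l = 1 → 2 ≤ G.degree (par l) ∧ ∀ u, G.Adj l u ↔ u = par l) ∧
      (∀ v, 2 ≤ G.degree v → idx v < G.spineOrder) ∧
      (∀ u v, 2 ≤ G.degree u → 2 ≤ G.degree v → idx u = idx v → u = v) ∧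
      (∀ i < G.spineOrder, ∃ v, 2 ≤ G.degree v ∧ idx v = i) ∧
      (∀ u v, 2 ≤ G.degree u → 2 ≤ G.degree v →
        (G.Adj u v ↔ idx u + 1 = idx v ∨ idx v + 1 = idx u)) ∧
      #G.edgeFinset + 1 = G.spineOrder + #{v | G.degree v = 1} := by
  obtain ⟨hT, hcard, ⟨φ⟩⟩ := hC
  have hnt : Nontrivial V := Fintype.one_lt_card_iff_nontrivial.1 (by omega)
  have hdeg : ∀ v, G.degree v = 1 ∨ 2 ≤ G.degree v := by
    intro v
    have h1 := hT.connected.preconnected.degree_pos_of_nontrivial v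
    have h2 : 0 < G.degree v := by convert h1
    omega
  have hpar : ∀ l, ∃ u, G.degree l = 1 → 2 ≤ G.degree u ∧ ∀ w, G.Adj l w ↔ w = u := by
    intro l
    by_cases h1 : G.degree l = 1
    · obtain ⟨u, hu, hu'⟩ := degree_eq_one_iff_existsUnique_adj.1 h1
      have : ∀ w, G.Adj l w ↔ w = u := fun w => ⟨hu' w, by rintro rfl; exact hu⟩
      exact ⟨u, fun _ => ⟨two_le_degree_of_adj_leaf hT.connected hcard this, this⟩⟩
    · exact ⟨l, fun h => absurd h h1⟩
  choose par hpar using hpar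
  have hφ : ∀ v (h : 2 ≤ G.degree v), (if h : 2 ≤ G.degree v then (φ ⟨v, h⟩ : ℕ) else 0) =
      φ ⟨v, h⟩ := fun v h => dif_pos h
  refine ⟨fun v => if h : 2 ≤ G.degree v then φ ⟨v, h⟩ else 0, par, hdeg, hpar, ?_, ?_, ?_, ?_, ?_⟩
  · intro v hv
    simp only [hφ v hv]
    exact (φ ⟨v, hv⟩).2
  · intro u v hu hv huv
    simp only [hφ u hu, hφ v hv] at huv
    exact congrArg Subtype.val (φ.injective (Fin.ext huv))
  · intro i hi
    obtain ⟨⟨v, hv⟩, hvi⟩ := φ.surjective ⟨i, hi⟩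
    exact ⟨v, hv, (hφ v hv).trans (congrArg Fin.val hvi)⟩
  · intro u v hu hv
    simp only [hφ u hu, hφ v hv]
    rw [← pathGraph_adj, φ.map_adj_iff]
    simp
  · have h1 : #G.edgeFinset + 1 = Fintype.card V := by
      convert hT.card_edgeFinset
    have h2 : G.spineOrder = #{v | 2 ≤ G.degree v} := by
      unfold SimpleGraph.spineOrder SimpleGraph.spine
      rw [Nat.card_eq_fintype_card, Fintype.card_subtype]
      simp
    rw [h1, h2, ← Finset.card_univ, ← Finset.card_filter_add_card_filter_not
      (s := Finset.univ) (fun v => 2 ≤ G.degree v)]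
    congr 2
    ext v
    have := hdeg v
    simp only [Finset.mem_filter, Finset.mem_univ, true_and]
    omega

/-! ### Labels of the spine and pendant edges -/

/-- The label of the spine edge joining positions `i - 1` and `i` of a spine of order `s`, in a
caterpillar with `ℓ` leaves: small and large labels alternate, both increasing along the spine,
and the last edge receives a large label. -/
def spineLabel (s ℓ i : ℕ) : ℕ :=
  if (i + s) % 2 = 0 then (i + 1) / 2 else (s - 1) / 2 + ℓ + 1 + (i - 1) / 2

/-- The contribution of the spine edges to the vertex sum at position `i`. -/
def spineSum (s ℓ i : ℕ) : ℕ :=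
  (if 1 ≤ i then spineLabel s ℓ i else 0) + if i + 1 < s then spineLabel s ℓ (i + 1) else 0

/-- Since both label classes increase by one in turn, consecutive interior vertices have
consecutive sums. -/
theorem spineSum_interior {s ℓ i : ℕ} (hi : 1 ≤ i) (his : i + 1 < s) :
    spineSum s ℓ i = (s - 1) / 2 + ℓ + 1 + i := by
  unfold spineSum spineLabel
  split_ifs <;> omega

theorem spineSum_last {s ℓ : ℕ} (hs : 2 ≤ s) : (s - 1) / 2 + ℓ + 1 ≤ spineSum s ℓ (s - 1) := by
  unfold spineSum spineLabel
  split_ifs <;> omega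

theorem spineSum_zero_even {s ℓ : ℕ} (hs : 2 ≤ s) (h : s % 2 = 0) :
    spineSum s ℓ 0 = (s - 1) / 2 + ℓ + 1 := by
  unfold spineSum spineLabel
  split_ifs <;> omega

theorem spineSum_zero_odd {s ℓ : ℕ} (hs : 2 ≤ s) (h : s % 2 = 1) : spineSum s ℓ 0 = 1 := by
  unfold spineSum spineLabel
  split_ifs <;> omega

theorem spineLabel_injOn {s ℓ i j : ℕ} (hi : 1 ≤ i) (his : i < s) (hj : 1 ≤ j) (hjs : j < s)
    (h : spineLabel s ℓ i = spineLabel s ℓ j) : i = j := by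
  unfold spineLabel at h
  split_ifs at h <;> omega

theorem spineLabel_mem {s ℓ i : ℕ} (hi : 1 ≤ i) (his : i < s) :
    1 ≤ spineLabel s ℓ i ∧ spineLabel s ℓ i ≤ s + ℓ - 1 ∧
      (spineLabel s ℓ i ≤ (s - 1) / 2 ∨ (s - 1) / 2 + ℓ < spineLabel s ℓ i) := by
  unfold spineLabel
  split_ifs <;> omega

/-- The labels of the pendant edges, for leaves `L` attached to the positions `π` of the spine,
when there are at least `⌊(3s+1)/2⌋` leaves and both ends of the spine carry one. For odd `s` the
edge at position `0` has the small label `1`, so one leaf there is singled out for the largest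
pendant label. -/
theorem exists_caterpillar_leaf_labels {α : Type*} (L : Finset α) (π : α → ℕ) (s : ℕ) (hs : 1 ≤ s)
    (hπ : ∀ v ∈ L, π v < s) (hL : (3 * s + 1) / 2 ≤ #L)
    (h0 : ∃ v ∈ L, π v = 0) (hlast : ∃ v ∈ L, π v = s - 1) :
    ∃ g : α → ℕ, (∀ v ∈ L, (s - 1) / 2 + 1 ≤ g v ∧ g v ≤ (s - 1) / 2 + #L) ∧ Set.InjOn g L ∧
      Set.InjOn (fun i => spineSum s #L i + ∑ v ∈ L with π v = i, g v) (Set.Iio s) ∧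
      ∀ i < s, (s - 1) / 2 + #L + 1 ≤ spineSum s #L i + ∑ v ∈ L with π v = i, g v := by
  obtain ⟨t, htL, ht0⟩ := h0
  obtain ⟨z, hzL, hz⟩ := hlast
  rcases Nat.mod_two_eq_zero_or_one s with hpar | hpar
  · apply exists_leaf_labels_s3 L ∅ π _ s _ hπ (by simp) (by simp)
    · simp; omega
    · intro i hi hno
      have hi0 : i ≠ 0 := fun h => by simpa using hno t htL (ht0.trans h.symm)
      have hil : i ≠ s - 1 := fun h => by simpa using hno z hzL (hz.trans h.symm)
      rw [spineSum_interior (by omega) (by omega)]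
      exact ⟨by omega, by simp⟩
    · intro i hi
      rcases Nat.eq_zero_or_pos i with rfl | hi0
      · rw [spineSum_zero_even (by omega) hpar]; omega
      · by_cases hil : i = s - 1
        · have := spineSum_last (s := s) (ℓ := #L) (by omega)
          subst hil; omega
        · rw [spineSum_interior (by omega) (by omega)]; omega
  · have hc0 : ({v ∈ ({t} : Finset α) | π v = 0} : Finset α) = {t} := by
      ext v; simp only [Finset.mem_filter, Finset.mem_singleton]
      exact ⟨fun h => h.1, fun h => ⟨h, h ▸ ht0⟩⟩
    have hcpos : ∀ i, i ≠ 0 → ({v ∈ ({t} : Finset α) | π v = i} : Finset α) = ∅ := by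
      intro i hi
      ext v; simp only [Finset.mem_filter, Finset.mem_singleton, Finset.notMem_empty, iff_false]
      rintro ⟨rfl, h⟩
      omega
    apply exists_leaf_labels_s3 L {t} π _ s _ hπ (by simpa using htL) (by simp)
    · simp; omega
    · intro i hi hno
      rcases Nat.eq_zero_or_pos i with rfl | hi0
      · have hs2 : 2 ≤ s := by
          by_contra hlt
          obtain rfl : s = 1 := by omega
          -- for a star, every leaf would be `t`, although there are at least two leaves
          have hsub : L ⊆ {t} := fun v hv => hno v hv (by have := hπ v hv; omega)
          have := Finset.card_le_card hsub
          simp at this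
          omega
        rw [hc0, spineSum_zero_odd hs2 hpar]
        simp; omega
      · have hil : i ≠ s - 1 := by
          intro h
          have : z = t := by simpa using hno z hzL (hz.trans h.symm)
          subst this
          omega
        rw [hcpos i (by omega), spineSum_interior (by omega) (by omega)]
        exact ⟨by omega, by simp⟩
    · intro i hi
      rcases Nat.eq_zero_or_pos i with rfl | hi0
      · rw [hc0]; simp
      · by_cases hil : i = s - 1
        · have := spineSum_last (s := s) (ℓ := #L) (by omega)
          subst hil; omega
        · rw [spineSum_interior (by omega) (by omega)]; omega

/-! ### Assembling the labeling -/

/-- A caterpillar with a spine of order `s` and at least `⌊(3s+1)/2⌋` leaves is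
antimagic. -/
theorem caterpillar_isAntimagic_of_many_leaves [Fintype V] (G : SimpleGraph V)
    (hC : G.IsCaterpillar) (s ℓ : ℕ) (hs : s = G.spineOrder)
    (hl : ℓ = (Finset.univ.filter fun v => G.degree v = 1).card)
    (hℓ : (3 * s + 1) / 2 ≤ ℓ) :
    G.IsAntimagic 0 := by
  obtain ⟨idx, par, hdeg, hpar, hidx, hinj, hsurj, hadj, hcard⟩ := hC.exists_coordinates
  rw [← hs] at hidx hsurj hcard
  rw [← hl] at hcard
  set L : Finset V := Finset.univ.filter fun v => G.degree v = 1 with hLdef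
  have hmemL : ∀ v, v ∈ L ↔ G.degree v = 1 := fun v => by simp [L]
  have hs1 : 1 ≤ s := by
    have : 0 < Fintype.card V := by have := hC.2.1; omega
    obtain ⟨v⟩ := Fintype.card_pos_iff.1 this
    rcases hdeg v with h | h
    · have := hidx _ (hpar v h).1; omega
    · have := hidx _ h; omega
  -- a spine vertex all of whose spine neighbours have the same position has a leaf neighbour
  have hend : ∀ i < s, ∀ j, (∀ k < s, i + 1 = k ∨ k + 1 = i → k = j) →
      ∃ v ∈ L, idx (par v) = i := by
    intro i hi j hij
    obtain ⟨v, hv, rfl⟩ := hsurj i hi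
    obtain ⟨x, hx, y, hy, hxy⟩ := Finset.one_lt_card.1 (show 1 < #(G.neighborFinset v) from hv)
    rw [mem_neighborFinset] at hx hy
    rcases hdeg x with h | hx2
    · exact ⟨x, (hmemL x).2 h, by rw [← ((hpar x h).2 v).1 hx.symm]⟩
    rcases hdeg y with h | hy2
    · exact ⟨y, (hmemL y).2 h, by rw [← ((hpar y h).2 v).1 hy.symm]⟩
    refine absurd (hinj x y hx2 hy2 ?_) hxy
    rw [hij _ (hidx x hx2) ((hadj v x hv hx2).1 hx), hij _ (hidx y hy2) ((hadj v y hv hy2).1 hy)]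
  obtain ⟨g, hg, hginj, hSinj, hSge⟩ := exists_caterpillar_leaf_labels L (fun v => idx (par v)) s hs1
    (fun v hv => hidx _ (hpar v ((hmemL v).1 hv)).1) (hl ▸ hℓ)
    (hend 0 (by omega) 1 (by omega)) (hend (s - 1) (by omega) (s - 2) (by omega))
  rw [← hl] at hg hSinj hSge
  let γ : V → ℕ := fun v => if G.degree v = 1 then g v else 0
  let f : Sym2 V → ℕ := Sym2.lift ⟨fun u v => γ u + γ v +
    if 2 ≤ G.degree u ∧ 2 ≤ G.degree v then spineLabel s ℓ (max (idx u) (idx v)) else 0,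
    fun u v => by simp only [add_comm (γ u), and_comm, max_comm]⟩
  have hfleaf : ∀ l u, G.degree l = 1 → 2 ≤ G.degree u → f s(l, u) = g l := by
    intro l u h1 h2
    have h3 : G.degree u ≠ 1 := by omega
    simp [f, γ, h1, h3]
  have hfspine : ∀ u v, 2 ≤ G.degree u → 2 ≤ G.degree v →
      f s(u, v) = spineLabel s ℓ (max (idx u) (idx v)) := by
    intro u v h1 h2
    have h3 : G.degree u ≠ 1 := by omega
    have h4 : G.degree v ≠ 1 := by omega
    simp [f, γ, h1, h2, h3, h4]
  have hedge : ∀ e ∈ G.edgeFinset, (∃ l ∈ L, e = s(l, par l) ∧ f e = g l) ∨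
      ∃ u v, 2 ≤ G.degree u ∧ 2 ≤ G.degree v ∧ idx u + 1 = idx v ∧ e = s(u, v) ∧
        f e = spineLabel s ℓ (idx v) := by
    intro e he
    induction e using Sym2.ind with
    | _ u v =>
      have huv : G.Adj u v := by simpa using he
      rcases hdeg u with hu | hu
      · have h := ((hpar u hu).2 v).1 huv
        exact Or.inl ⟨u, (hmemL u).2 hu, by rw [h], hfleaf _ _ hu (h ▸ (hpar u hu).1)⟩
      rcases hdeg v with hv | hv
      · have h := ((hpar v hv).2 u).1 huv.symm
        exact Or.inl ⟨v, (hmemL v).2 hv, by rw [h, Sym2.eq_swap],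
          by rw [Sym2.eq_swap]; exact hfleaf _ _ hv hu⟩
      right
      rcases (hadj u v hu hv).1 huv with h | h
      · exact ⟨u, v, hu, hv, h, rfl, by rw [hfspine u v hu hv]; congr 1; omega⟩
      · exact ⟨v, u, hv, hu, h, Sym2.eq_swap, by rw [hfspine u v hu hv]; congr 1; omega⟩
  have hsumleaf : ∀ l, G.degree l = 1 → G.vertexSum f l = g l := by
    intro l hl1
    have : G.neighborFinset l = {par l} := by
      ext w; simp [(hpar l hl1).2 w]
    rw [vertexSum_eq_sum_neighborFinset, this, Finset.sum_singleton,
      hfleaf l _ hl1 (hpar l hl1).1]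
  have hsumspine : ∀ v, 2 ≤ G.degree v → G.vertexSum f v =
      spineSum s ℓ (idx v) + ∑ l ∈ L with idx (par l) = idx v, g l := by
    intro v hv
    rw [vertexSum_eq_sum_neighborFinset, ← Finset.sum_filter_add_sum_filter_not
      (G.neighborFinset v) (fun w => 2 ≤ G.degree w)]
    congr 1
    · have him : ((G.neighborFinset v).filter (fun w => 2 ≤ G.degree w)).image idx =
          (Finset.range s).filter (fun j => idx v = j + 1) ∪
            (Finset.range s).filter (fun j => j = idx v + 1) := by
        ext j
        simp only [Finset.mem_image, Finset.mem_filter, mem_neighborFinset, Finset.mem_union,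
          Finset.mem_range]
        constructor
        · rintro ⟨w, ⟨hvw, hw⟩, rfl⟩
          have := hidx w hw
          rcases (hadj v w hv hw).1 hvw with h | h
          · exact Or.inr ⟨this, h.symm⟩
          · exact Or.inl ⟨this, h.symm⟩
        · intro h
          have hj : j < s := by omega
          obtain ⟨w, hw, rfl⟩ := hsurj j hj
          exact ⟨w, ⟨(hadj v w hv hw).2 (by omega), hw⟩, rfl⟩
      have hdisj : Disjoint ((Finset.range s).filter (fun j => idx v = j + 1))
          ((Finset.range s).filter (fun j => j = idx v + 1)) := by
        rw [Finset.disjoint_left]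
        intro j h1 h2
        simp only [Finset.mem_filter] at h1 h2
        omega
      have hsplit : ∑ w ∈ G.neighborFinset v with 2 ≤ G.degree w, f s(v, w) =
          ∑ j ∈ ((G.neighborFinset v).filter (fun w => 2 ≤ G.degree w)).image idx,
            spineLabel s ℓ (max (idx v) j) := by
        rw [Finset.sum_image]
        · refine Finset.sum_congr rfl fun w hw => hfspine v w hv (Finset.mem_filter.1 hw).2
        · intro x hx y hy hxy
          exact hinj x y (Finset.mem_filter.1 hx).2 (Finset.mem_filter.1 hy).2 hxy
      rw [hsplit, him, Finset.sum_union hdisj]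
      have hvs := hidx v hv
      unfold spineSum
      congr 1
      · split_ifs with h
        · have : (Finset.range s).filter (fun j => idx v = j + 1) = {idx v - 1} := by
            ext j; simp only [Finset.mem_filter, Finset.mem_range, Finset.mem_singleton]; omega
          rw [this, Finset.sum_singleton]
          congr 1; omega
        · apply Finset.sum_eq_zero
          intro j hj
          have := (Finset.mem_filter.1 hj).2; omega
      · split_ifs with h
        · have : (Finset.range s).filter (fun j => j = idx v + 1) = {idx v + 1} := by
            ext j; simp only [Finset.mem_filter, Finset.mem_range, Finset.mem_singleton]; omega
          rw [this, Finset.sum_singleton]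
          congr 1; omega
        · apply Finset.sum_eq_zero
          intro j hj
          have := Finset.mem_filter.1 hj
          have := Finset.mem_range.1 this.1
          omega
    · have hset : (G.neighborFinset v).filter (fun w => ¬ 2 ≤ G.degree w) =
          L.filter (fun l => idx (par l) = idx v) := by
        ext w
        simp only [Finset.mem_filter, mem_neighborFinset, hmemL]
        constructor
        · rintro ⟨hvw, hw⟩
          have hw1 : G.degree w = 1 := (hdeg w).resolve_right hw
          exact ⟨hw1, by rw [← ((hpar w hw1).2 v).1 hvw.symm]⟩
        · rintro ⟨hw1, hw⟩
          have := hinj _ _ (hpar w hw1).1 hv hw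
          exact ⟨(((hpar w hw1).2 v).2 this.symm).symm, by omega⟩
      rw [hset]
      refine Finset.sum_congr rfl fun w hw => ?_
      rw [Sym2.eq_swap]
      exact hfleaf w v ((hmemL w).1 (Finset.mem_filter.1 hw).1) hv
  refine ⟨f, ?_, ?_, ?_⟩
  · intro e he
    rw [Finset.mem_Icc]
    rcases hedge e he with ⟨l, hlL, -, h⟩ | ⟨u, v, hu, hv, huv, -, h⟩
    · have := hg l hlL
      omega
    · have := spineLabel_mem (s := s) (ℓ := ℓ) (i := idx v) (by omega) (hidx v hv)
      omega
  · intro e he e' he' hee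
    rcases hedge e he with ⟨l, hlL, hel, h⟩ | ⟨u, v, hu, hv, huv, hel, h⟩ <;>
      rcases hedge e' he' with ⟨l', hlL', hel', h'⟩ | ⟨u', v', hu', hv', huv', hel', h'⟩
    · have : l = l' := hginj hlL hlL' (by omega)
      rw [hel, hel', this]
    · have := hg l hlL
      have := spineLabel_mem (s := s) (ℓ := ℓ) (i := idx v') (by omega) (hidx v' hv')
      omega
    · have := hg l' hlL'
      have := spineLabel_mem (s := s) (ℓ := ℓ) (i := idx v) (by omega) (hidx v hv)
      omega
    · have hvv : idx v = idx v' := spineLabel_injOn (by omega) (hidx v hv) (by omega)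
        (hidx v' hv') (by rw [← h, ← h', hee])
      rw [hel, hel', hinj v v' hv hv' hvv, hinj u u' hu hu' (by omega)]
  · intro x y hxy
    rcases hdeg x with hx | hx <;> rcases hdeg y with hy | hy
    · rw [hsumleaf x hx, hsumleaf y hy] at hxy
      exact hginj ((hmemL x).2 hx) ((hmemL y).2 hy) hxy
    · rw [hsumleaf x hx, hsumspine y hy] at hxy
      have := hg x ((hmemL x).2 hx)
      have := hSge (idx y) (hidx y hy)
      omega
    · rw [hsumspine x hx, hsumleaf y hy] at hxy
      have := hg y ((hmemL y).2 hy)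
      have := hSge (idx x) (hidx x hx)
      omega
    · rw [hsumspine x hx, hsumspine y hy] at hxy
      exact hinj x y hx hy (hSinj (hidx x hx) (hidx y hy) hxy)
end
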